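/- Let (X, T) be an L-fuzzy topological space, G ∈ L^X, and suppose β(c ∧ d) = β(c) ∩ β(d) for all c, d ∈ L. Then the following are equivalent: (1) G is L-fuzzy SP-compact; (2) for every a ∈ M(L), every strong β_a-cover U of G with a ∈ β(⋀_{F∈U} T_sp(F)) has a finite subfamily which is a strong β_a-cover of G; (3) for every a ∈ M(L), for every strong β_a-cover U of G with a ∈ β(⋀_{F∈U} T_sp(F)), there exist a finite subfamily V ⊆ U and b ∈ M(L) with a ∈ β*(b) such that V is a strong β_b-cover of G. -/

import Mathlib

/-!
The argument is a translation between inequalities and the relation `≪`. Three facts about a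
completely distributive lattice with an order-reversing involution carry it:

* `a ≪ ⨆ i, f i` implies `a ≪ f i` for some `i` (`wayBelow_iSup`), a consequence of
  interpolation;
* every element is the supremum of the coprime elements way below it (`le_of_coprime_wayBelow`);
* by hypothesis, `a ≪ p ⊓ q` iff `a ≪ p` and `a ≪ q`.

If `G` is SP-compact and `a` is way below both infima, then `a` is way below their meet, hence
way below the supremum over finite subfamilies, hence way below one of its terms; interpolating a
coprime `b` gives the sharper form. Conversely, the compactness inequality may be tested on
coprime elements way below its left side, and for these the covering property applies.

Coprime elements are produced from primes through the involution. Primes come from Zorn's lemma: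
if `¬ b ≤ t`, a descending chain `b = y 0 ≫ y 1 ≫ ⋯` bounded below by some `x` with `¬ x ≤ t`
generates a Scott-open filter avoiding `t`, and an element above `t` maximal outside this filter
is prime.
-/

/-!
Common definitions: completely distributive complete lattice `L` with an
order-reversing involution `c`, `L`-subsets `X → L`, the wayBelow relation `≪`,
coprime/prime elements, `L`-(fuzzy) topologies, closure/interior, (Semi-)Preopen
subsets, the `L`-fuzzy Preopen and Semi-Preopen operators, and the various
compactness / cover / shading / remote-family notions.
-/

variable {L : Type*} [CompletelyDistribLattice L] {X : Type*}

/-- `a ≪ b`: for every subset `D ⊆ L` with `b ≤ sSup D` there is `d ∈ D` with `a ≤ d`. -/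
def wayBelow (a b : L) : Prop := ∀ D : Set L, b ≤ sSup D → ∃ d ∈ D, a ≤ d

/-- coprime (non-zero) element of `L`; `M(L)` is the set of such elements. -/
def IsCoprimeElem (a : L) : Prop := a ≠ ⊥ ∧ ∀ p q : L, a ≤ p ⊔ q → a ≤ p ∨ a ≤ q

/-- prime (non-unit) element of `L`; `P(L)` is the set of such elements. -/
def IsPrimeElem (p : L) : Prop := p ≠ ⊤ ∧ ∀ a b : L, a ⊓ b ≤ p → a ≤ p ∨ b ≤ p

/-- pointwise complement of an `L`-subset via the involution `c`. -/
def pcompl (c : L → L) (A : X → L) : X → L := fun x => c (A x)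

/-- `T : L^X → L` is an `L`-fuzzy topology. -/
def IsLFuzzyTopology (T : (X → L) → L) : Prop :=
  T ⊥ = ⊤ ∧ T ⊤ = ⊤ ∧ (∀ A B : X → L, T A ⊓ T B ≤ T (A ⊓ B)) ∧
    (∀ S : Set (X → L), (⨅ A ∈ S, T A) ≤ T (sSup S))

/-- `τ ⊆ L^X` is an `L`-topology. -/
def IsLTopology (τ : Set (X → L)) : Prop :=
  ⊥ ∈ τ ∧ ⊤ ∈ τ ∧ (∀ S : Set (X → L), S ⊆ τ → sSup S ∈ τ) ∧
    (∀ A B : X → L, A ∈ τ → B ∈ τ → A ⊓ B ∈ τ)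

/-- closure in an `L`-topological space: infimum of all closed `L`-subsets above `A`. -/
def lcl (c : L → L) (τ : Set (X → L)) (A : X → L) : X → L :=
  sInf {K : X → L | pcompl c K ∈ τ ∧ A ≤ K}

/-- interior in an `L`-topological space: supremum of all open `L`-subsets below `A`. -/
def lint (τ : Set (X → L)) (A : X → L) : X → L :=
  sSup {U : X → L | U ∈ τ ∧ U ≤ A}

/-- `A` is Preopen: `A ≤ int (cl A)`. -/
def IsPreopen (c : L → L) (τ : Set (X → L)) (A : X → L) : Prop :=
  A ≤ lint τ (lcl c τ A)

/-- `A` is Semi-Preopen: there is a Preopen `B` with `B ≤ A ≤ cl B`. -/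
def IsSemiPreopen (c : L → L) (τ : Set (X → L)) (A : X → L) : Prop :=
  ∃ B : X → L, IsPreopen c τ B ∧ B ≤ A ∧ A ≤ lcl c τ B

/-- the `L`-fuzzy Preopen operator `T_p` induced by `T`. -/
def preopenOp (c : L → L) (T : (X → L) → L) (A : X → L) : L :=
  ⨅ x : X, ⨅ lam : L, ⨅ _ : wayBelow lam (A x),
    ⨆ B : X → L, ⨆ _ : wayBelow lam (B x),
      (T B ⊓ ⨅ y : X, ⨅ mu : L, ⨅ _ : wayBelow mu (B y),
        ⨅ D : X → L, ⨅ _ : A ≤ D, ⨅ _ : ¬ mu ≤ D y, c (T (pcompl c D)))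

/-- the `L`-fuzzy Semi-Preopen operator `T_sp` induced by `T`. -/
def spOp (c : L → L) (T : (X → L) → L) (A : X → L) : L :=
  ⨆ B : X → L, ⨆ _ : B ≤ A,
    (preopenOp c T B ⊓ ⨅ x : X, ⨅ lam : L, ⨅ _ : wayBelow lam (A x),
      ⨅ D : X → L, ⨅ _ : B ≤ D, ⨅ _ : ¬ lam ≤ D x, c (T (pcompl c D)))

/-- `G` is `L`-fuzzy SP-compact in the `L`-fuzzy topological space `(X, T)`. -/
def LFuzzySPCompact (c : L → L) (T : (X → L) → L) (G : X → L) : Prop :=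
  ∀ P : Set (X → L),
    (⨅ F ∈ P, spOp c T F) ⊓ (⨅ x : X, c (G x) ⊔ ⨆ F ∈ P, F x) ≤
      ⨆ Q : Finset (X → L), ⨆ _ : ↑Q ⊆ P, ⨅ x : X, c (G x) ⊔ ⨆ F ∈ Q, F x

/-- `G` is fuzzy SP-compact in the `L`-topological space `(X, τ)`. -/
def FuzzySPCompact (c : L → L) (τ : Set (X → L)) (G : X → L) : Prop :=
  ∀ U : Set (X → L), (∀ A ∈ U, IsSemiPreopen c τ A) →
    (⨅ x : X, c (G x) ⊔ ⨆ A ∈ U, A x) ≤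
      ⨆ ψ : Finset (X → L), ⨆ _ : ↑ψ ⊆ U, ⨅ x : X, c (G x) ⊔ ⨆ A ∈ ψ, A x

/-- `U` is a `Q_a`-cover of `G`. -/
def QCover (c : L → L) (a : L) (G : X → L) (U : Set (X → L)) : Prop :=
  ∀ x : X, a ≤ c (G x) ⊔ ⨆ A ∈ U, A x

/-- `U` is a strong `β_a`-cover of `G`. -/
def StrongBetaCover (c : L → L) (a : L) (G : X → L) (U : Set (X → L)) : Prop :=
  wayBelow a (⨅ x : X, c (G x) ⊔ ⨆ A ∈ U, A x)

/-- `P` is a strong `a`-remote family of `G`. -/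
def StrongRemote (a : L) (G : X → L) (P : Set (X → L)) : Prop :=
  ¬ a ≤ ⨆ x : X, G x ⊓ ⨅ B ∈ P, B x

/-- `U` is a strong `a`-shading of `G`. -/
def StrongShading (c : L → L) (a : L) (G : X → L) (U : Set (X → L)) : Prop :=
  ¬ (⨅ x : X, c (G x) ⊔ ⨆ A ∈ U, A x) ≤ a

/-- `G` is `a`-fuzzy SP-compact in the `L`-topological space `(X, τ)`. -/
def AFuzzySPCompact (c : L → L) (τ : Set (X → L)) (a : L) (G : X → L) : Prop :=
  ∀ b : L, wayBelow b a →
    ∀ U : Set (X → L), (∀ A ∈ U, IsSemiPreopen c τ A) → QCover c a G U →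
      ∃ V : Finset (X → L), ↑V ⊆ U ∧ QCover c b G ↑V

theorem wayBelow.le {a b : L} (h : wayBelow a b) : a ≤ b := by
  obtain ⟨d, rfl, hd⟩ := h {b} (by simp)
  exact hd

theorem wayBelow.mono {a a' b b' : L} (h : wayBelow a b) (ha : a' ≤ a) (hb : b ≤ b') :
    wayBelow a' b' := fun D hD =>
  let ⟨d, hd, had⟩ := h D (hb.trans hD)
  ⟨d, hd, ha.trans had⟩

/-- Complete distributivity, applied to the family of all `D` with `b ≤ sSup D`, writes `b` as a
supremum of elements way below it. -/
theorem le_sSup_wayBelow (b : L) : b ≤ sSup {a : L | wayBelow a b} := by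
  have h : b ≤ ⨅ D : {D : Set L // b ≤ sSup D}, ⨆ d : D.1, (d : L) :=
    le_iInf fun D => D.2.trans (sSup_eq_iSup' D.1).le
  rw [iInf_iSup_eq] at h
  refine h.trans (iSup_le fun g => le_sSup ?_)
  exact fun D hD => ⟨g ⟨D, hD⟩, (g ⟨D, hD⟩).2, iInf_le (fun D => (g D : L)) ⟨D, hD⟩⟩

theorem wayBelow_interpolate {a b : L} (h : wayBelow a b) :
    ∃ y, wayBelow a y ∧ wayBelow y b := by
  obtain ⟨d, ⟨y, hy, hd⟩, had⟩ := h {d | ∃ y, wayBelow y b ∧ wayBelow d y} <|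
    (le_sSup_wayBelow b).trans <| sSup_le fun y hy =>
      (le_sSup_wayBelow y).trans <| sSup_le_sSup fun d hd => ⟨y, hy, hd⟩
  exact ⟨y, hd.mono had le_rfl, hy⟩

theorem wayBelow_sSup {a : L} {D : Set L} (h : wayBelow a (sSup D)) : ∃ d ∈ D, wayBelow a d := by
  obtain ⟨y, hay, hy⟩ := wayBelow_interpolate h
  obtain ⟨d, hd, hyd⟩ := hy D le_rfl
  exact ⟨d, hd, hay.mono le_rfl hyd⟩

theorem wayBelow_iSup {ι : Sort*} {a : L} {f : ι → L} (h : wayBelow a (⨆ i, f i)) :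
    ∃ i, wayBelow a (f i) := by
  obtain ⟨_, ⟨i, rfl⟩, hi⟩ := wayBelow_sSup h
  exact ⟨i, hi⟩

/-- Primes separate points: `t` is the infimum of the primes above it. -/
theorem exists_prime_of_not_le {b t : L} (h : ¬ b ≤ t) :
    ∃ p : L, IsPrimeElem p ∧ t ≤ p ∧ ¬ b ≤ p := by
  obtain ⟨x, hxb, hxt⟩ : ∃ x, wayBelow x b ∧ ¬ x ≤ t := by
    by_contra! hcon
    exact h ((le_sSup_wayBelow b).trans (sSup_le hcon))
  choose f hf using fun z : {z : L // wayBelow x z} => wayBelow_interpolate z.2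
  let y : ℕ → {z : L // wayBelow x z} := fun n =>
    Nat.rec ⟨b, hxb⟩ (fun _ z => ⟨f z, (hf z).1⟩) n
  have hy : ∀ n, wayBelow (y (n + 1)).1 (y n).1 := fun n => (hf (y n)).2
  have hanti : Antitone fun n => (y n).1 := antitone_nat_of_succ_le fun n => (hy n).le
  obtain ⟨p, htp, hp⟩ := zorn_le_nonempty₀ {z : L | ∀ n, ¬ (y n).1 ≤ z} (by
    intro C hC hchain z hz
    refine ⟨sSup C, fun n hn => ?_, fun w hw => le_sSup hw⟩
    obtain ⟨d, hd, hnd⟩ := hy n C hn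
    exact hC hd (n + 1) hnd) t (fun n hn => hxt ((y n).2.le.trans hn))
  have hpn : ∀ n, ¬ (y n).1 ≤ p := hp.prop
  -- By maximality, joining `p` with an element not below it lands in the filter.
  have key : ∀ u, ¬ u ≤ p → ∃ n, (y n).1 ≤ p ⊔ u := by
    intro u hu
    by_contra! hcon
    exact hu (le_sup_right.trans (hp.le_of_ge hcon le_sup_left))
  refine ⟨p, ⟨?_, ?_⟩, htp, hpn 0⟩
  · rintro rfl
    exact hpn 0 le_top
  · intro u v huv
    by_contra! hcon
    obtain ⟨m, hm⟩ := key u hcon.1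
    obtain ⟨n, hn⟩ := key v hcon.2
    refine hpn (max m n) ?_
    have h1 : (y (max m n)).1 ≤ (p ⊔ u) ⊓ (p ⊔ v) :=
      le_inf ((hanti (le_max_left m n)).trans hm) ((hanti (le_max_right m n)).trans hn)
    rw [← sup_inf_left] at h1
    exact h1.trans (sup_le le_rfl huv)

theorem IsPrimeElem.coprime_compl {c : L → L} (hc_inv : ∀ a : L, c (c a) = a)
    (hc_anti : ∀ a b : L, a ≤ b → c b ≤ c a) {p : L} (hp : IsPrimeElem p) : IsCoprimeElem (c p) := by
  have swap : ∀ {a b : L}, c a ≤ b → c b ≤ a := fun {a b} h => hc_inv a ▸ hc_anti _ _ h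
  have swap' : ∀ {a b : L}, a ≤ c b → b ≤ c a := fun {a b} h => hc_inv b ▸ hc_anti _ _ h
  refine ⟨fun h => hp.1 (top_le_iff.1 ?_), fun u v huv => ?_⟩
  · have h0 : c ⊤ ≤ c p := hc_anti _ _ le_top
    rw [h] at h0
    exact (swap' bot_le).trans (swap (h.le))
  · have h1 : u ⊔ v ≤ c (c u ⊓ c v) := sup_le (swap' inf_le_left) (swap' inf_le_right)
    exact (hp.2 _ _ ((swap' h1).trans (swap huv))).imp swap swap

/-- The order can be tested on coprime elements way below the left side; that is, `b` is the
supremum of the coprime elements way below it. -/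
theorem le_of_coprime_wayBelow {c : L → L} (hc_inv : ∀ a : L, c (c a) = a)
    (hc_anti : ∀ a b : L, a ≤ b → c b ≤ c a) {b t : L}
    (h : ∀ m, IsCoprimeElem m → wayBelow m b → m ≤ t) : b ≤ t := by
  refine (le_sSup_wayBelow b).trans (sSup_le fun a hab => ?_)
  by_contra hat
  obtain ⟨p, hp, hap, htp⟩ := exists_prime_of_not_le (b := c t) (t := c a) fun hle =>
    hat (by simpa only [hc_inv] using hc_anti _ _ hle)
  have hpa : c p ≤ a := hc_inv a ▸ hc_anti _ _ hap
  have hpt := h (c p) (hp.coprime_compl hc_inv hc_anti) (hab.mono hpa le_rfl)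
  exact htp (hc_inv p ▸ hc_anti _ _ hpt)

theorem exists_coprime_wayBelow {c : L → L} (hc_inv : ∀ a : L, c (c a) = a)
    (hc_anti : ∀ a b : L, a ≤ b → c b ≤ c a) {a b : L} (h : wayBelow a b) :
    ∃ m, IsCoprimeElem m ∧ wayBelow a m ∧ wayBelow m b := by
  have hb : b ≤ sSup {m | IsCoprimeElem m ∧ wayBelow m b} :=
    le_of_coprime_wayBelow hc_inv hc_anti fun m hm hmb => le_sSup ⟨hm, hmb⟩
  obtain ⟨m, ⟨hm, hmb⟩, ham⟩ := wayBelow_sSup (h.mono le_rfl hb)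
  exact ⟨m, hm, ham, hmb⟩

theorem stmt11 (c : L → L) (hc_inv : ∀ a : L, c (c a) = a)
    (hc_anti : ∀ a b : L, a ≤ b → c b ≤ c a) (T : (X → L) → L) (hT : IsLFuzzyTopology T) (G : X → L)
    (hbeta : ∀ p q : L,
      {a : L | wayBelow a (p ⊓ q)} = {a : L | wayBelow a p} ∩ {a : L | wayBelow a q}) :
    (LFuzzySPCompact c T G ↔
      ∀ a : L, IsCoprimeElem a → ∀ U : Set (X → L), StrongBetaCover c a G U →
        wayBelow a (⨅ F ∈ U, spOp c T F) →
          ∃ V : Finset (X → L), ↑V ⊆ U ∧ StrongBetaCover c a G ↑V) ∧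
    (LFuzzySPCompact c T G ↔
      ∀ a : L, IsCoprimeElem a → ∀ U : Set (X → L), StrongBetaCover c a G U →
        wayBelow a (⨅ F ∈ U, spOp c T F) →
          ∃ V : Finset (X → L), ↑V ⊆ U ∧
            ∃ b : L, IsCoprimeElem b ∧ wayBelow a b ∧ StrongBetaCover c b G ↑V) := by
  have hinf : ∀ {a p q : L}, wayBelow a (p ⊓ q) ↔ wayBelow a p ∧ wayBelow a q :=
    fun {a p q} => Set.ext_iff.1 (hbeta p q) a
  have h12 : LFuzzySPCompact c T G → ∀ a : L, ∀ U : Set (X → L), StrongBetaCover c a G U →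
      wayBelow a (⨅ F ∈ U, spOp c T F) →
        ∃ V : Finset (X → L), ↑V ⊆ U ∧ StrongBetaCover c a G ↑V := by
    intro h a U hcov hsp
    obtain ⟨V, hV⟩ := wayBelow_iSup ((hinf.2 ⟨hsp, hcov⟩).mono le_rfl (h U))
    obtain ⟨hVU, hV⟩ := wayBelow_iSup hV
    exact ⟨V, hVU, hV⟩
  have h21 : (∀ a : L, IsCoprimeElem a → ∀ U : Set (X → L), StrongBetaCover c a G U →
      wayBelow a (⨅ F ∈ U, spOp c T F) →
        ∃ V : Finset (X → L), ↑V ⊆ U ∧ StrongBetaCover c a G ↑V) → LFuzzySPCompact c T G := by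
    intro h P
    refine le_of_coprime_wayBelow hc_inv hc_anti fun a ha haP => ?_
    obtain ⟨hsp, hcov⟩ := hinf.1 haP
    obtain ⟨V, hVP, hV⟩ := h a ha P hcov hsp
    exact le_iSup₂_of_le V hVP hV.le
  refine ⟨⟨fun h a _ => h12 h a, h21⟩, fun h a _ U hcov hsp => ?_, fun h => h21 ?_⟩
  · obtain ⟨V, hVU, hV⟩ := h12 h a U hcov hsp
    obtain ⟨b, hb, hab, hbV⟩ := exists_coprime_wayBelow hc_inv hc_anti hV
    exact ⟨V, hVU, b, hb, hab, hbV⟩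
  · intro a ha U hcov hsp
    obtain ⟨V, hVU, b, -, hab, hbV⟩ := h a ha U hcov hsp
    exact ⟨V, hVU, wayBelow.mono hbV hab.le le_rfl⟩
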